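/- Let n ≥ 1 and let λ = (λ_1 ≥ λ_2 ≥ … ≥ λ_n ≥ 0) be a partition with at most n parts. Then the number of semistandard Young tableaux of shape λ with all entries in {1, 2, …, n} equals the product over all pairs 1 ≤ i < j ≤ n of (λ_i − λ_j + j − i)/(j − i). -/

import Mathlib

/-- `T : ℕ → ℕ → ℕ` (rows and columns indexed from `0`) is a semistandard Young
tableau of shape `lam` (a partition with at most `n` parts) with entries in `{1, …, n}`:
entries vanish outside the diagram, each entry in the diagram is in `{1, …, n}`, rows are
weakly increasing and columns are strictly increasing. -/
def IsSSYT (n : ℕ) (lam : Fin n → ℕ) (T : ℕ → ℕ → ℕ) : Prop :=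
  (∀ i j, T i j ≠ 0 → ∃ h : i < n, j < lam ⟨i, h⟩) ∧
  (∀ (i : Fin n) (j : ℕ), j < lam i → 1 ≤ T i.1 j ∧ T i.1 j ≤ n) ∧
  (∀ (i : Fin n) (j₁ j₂ : ℕ), j₁ ≤ j₂ → j₂ < lam i → T i.1 j₁ ≤ T i.1 j₂) ∧
  (∀ (i₁ i₂ : Fin n) (j : ℕ), i₁ < i₂ → j < lam i₂ → T i₁.1 j < T i₂.1 j)

/-!
Deleting the entries equal to `n + 1` from a tableau of shape `λ` with entries in `{1, …, n + 1}`
leaves a tableau with entries in `{1, …, n}`, whose shape `μ` can be any partition interlacing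
`λ`, i.e. `λ_{i+1} ≤ μ_i ≤ λ_i`. So the number of tableaux satisfies the branching rule
`N_{n+1}(λ) = ∑_μ N_n(μ)`.

The determinant `D_n(λ) = det (binom(i - λ_i, j))`, `0 ≤ i, j < n`, satisfies the same rule:
subtracting from each row the preceding one reduces `D_{n+1}(λ)` to an `n × n` determinant whose
`i`-th row telescopes into a sum over `μ_i ∈ [λ_{i+1}, λ_i]`, and the determinant is multilinear
in its rows. Finally, since `j! * binom(x, j)` is monic of degree `j` in `x`, `D_n(λ)` is a
constant multiple of the Vandermonde determinant of the `i - λ_i`; the constant is found by taking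
`λ = 0`, where the matrix is unitriangular.
-/

open Finset Matrix Polynomial

/-! ### Determinants of binomial coefficients -/

section Determinant

variable {R : Type*} [CommRing R] {n : ℕ}

theorem det_of_sum_eq_sum_piFinset {ι α : Type*} [Fintype ι] [DecidableEq ι] (s : ι → Finset α)
    (v : ι → α → ι → R) :
    (of fun i => ∑ a ∈ s i, v i a).det = ∑ f ∈ Fintype.piFinset s, (of fun i => v i (f i)).det :=
  (detRowAlternating (R := R) (n := ι)).toMultilinearMap.map_sum_finset v s

theorem det_eq_det_sub_of_col_zero_eq_one {A : Matrix (Fin (n + 1)) (Fin (n + 1)) R}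
    (hA : ∀ i, A i 0 = 1) :
    A.det = (of fun i j : Fin n => A i.succ j.succ - A i.castSucc j.succ).det := by
  let B : Matrix (Fin (n + 1)) (Fin (n + 1)) R :=
    of (Fin.cons (A 0) fun i => A i.succ - A i.castSucc)
  have hAB : A.det = B.det :=
    det_eq_of_forall_row_eq_smul_add_pred (fun _ => 1) (fun _ => rfl) (by simp [B])
  rw [hAB, det_succ_column_zero, Fin.sum_univ_succ]
  simp [B, hA, submatrix]

variable [BinomialRing R]

/-- The matrix of generalized binomial coefficients `binom(y i, j)`, which plays the role of a
Vandermonde matrix in the basis `binom(x, j)` of the polynomials. -/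
def chooseMatrix (y : Fin n → R) : Matrix (Fin n) (Fin n) R :=
  of fun i j => Ring.choose (y i) (j : ℕ)

theorem sum_Icc_choose_sub (x : R) (k : ℕ) {a b : ℕ} (hab : a ≤ b) :
    ∑ m ∈ Icc a b, Ring.choose (x - m) k =
      Ring.choose (x + 1 - a) (k + 1) - Ring.choose (x - b) (k + 1) := by
  have pascal (m : ℕ) : Ring.choose (x - m) k =
      -Ring.choose (x + 1 - (m + 1 : ℕ)) (k + 1) - -Ring.choose (x + 1 - m) (k + 1) := by
    rw [Nat.cast_succ, add_sub_add_right_eq_sub, add_sub_right_comm, Ring.choose_succ_succ]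
    ring
  rw [sum_congr rfl fun m _ => pascal m,
    sum_Icc_sub hab fun m => -Ring.choose (x + 1 - m) (k + 1), Nat.cast_succ,
    add_sub_add_right_eq_sub]
  ring

theorem det_chooseMatrix_succ (y : Fin (n + 1) → R) :
    (chooseMatrix y).det =
      (of fun i j : Fin n => Ring.choose (y i.succ) (j + 1 : ℕ) -
        Ring.choose (y i.castSucc) (j + 1 : ℕ)).det := by
  rw [det_eq_det_sub_of_col_zero_eq_one fun i => by simp [chooseMatrix]]
  rfl

theorem det_vandermonde_eq_prod_factorial_mul (y : Fin n → R) :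
    (vandermonde y).det = (∏ j : Fin n, ((j : ℕ).factorial : R)) * (chooseMatrix y).det := by
  nontriviality R
  let p (j : Fin n) : R[X] := (descPochhammer ℤ j).map (Int.castRingHom R)
  have hdegree (j : Fin n) : (p j).natDegree = j := by
    rw [(monic_descPochhammer ℤ j).natDegree_map, descPochhammer_natDegree]
  have hmonic (j : Fin n) : (p j).Monic := (monic_descPochhammer ℤ j).map _
  have heval (x : R) (j : Fin n) :
      (p j).eval x = ((j : ℕ).factorial : R) * Ring.choose x (j : ℕ) := by
    rw [eval_map, ← algebraMap_int_eq, ← aeval_def, aeval_eq_smeval,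
      Ring.descPochhammer_eq_factorial_smul_choose, nsmul_eq_mul]
  simp only [det_eval_matrixOfPolynomials_eq_det_vandermonde y p hdegree hmonic, heval]
  exact det_mul_row _ (chooseMatrix y)

theorem det_chooseMatrix_natCast_val :
    (chooseMatrix fun i : Fin n => ((i : ℕ) : R)).det = 1 := by
  rw [det_of_isLowerTriangular _ fun i j hij => ?_]
  · simp [chooseMatrix, Ring.choose_natCast]
  · have hlt : i < j := OrderDual.toDual_lt_toDual.1 hij
    simp [chooseMatrix, Ring.choose_natCast, Nat.choose_eq_zero_of_lt hlt]

end Determinant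

theorem det_chooseMatrix_eq_prod_div {K : Type*} [Field K] [CharZero K] {n : ℕ} (y : Fin n → K) :
    (chooseMatrix y).det = ∏ i, ∏ j ∈ Ioi i, (y j - y i) / ((j : ℕ) - (i : ℕ)) := by
  have hy := det_vandermonde_eq_prod_factorial_mul y
  have hid := det_vandermonde_eq_prod_factorial_mul fun i : Fin n => ((i : ℕ) : K)
  have hid_ne : (vandermonde fun i : Fin n => ((i : ℕ) : K)).det ≠ 0 :=
    det_vandermonde_ne_zero_iff.2 (Nat.cast_injective.comp Fin.val_injective)
  rw [det_chooseMatrix_natCast_val, mul_one] at hid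
  rw [← hid, mul_comm, ← div_eq_iff hid_ne] at hy
  simp only [← hy, det_vandermonde, prod_div_distrib]

/-! ### Interlacing shapes -/

/-- The cell in row `i` and column `j`, both counted from `0`, lies in the diagram with row
lengths `lam`. -/
def InDiagram {n : ℕ} (lam : Fin n → ℕ) (i j : ℕ) : Prop :=
  ∃ h : i < n, j < lam ⟨i, h⟩

/-- The shapes `mu` with `lam i.succ ≤ mu i ≤ lam i.castSucc`, i.e. the possible rows below `lam`
in a Gelfand–Tsetlin pattern. -/
def interlacing {n : ℕ} (lam : Fin (n + 1) → ℕ) : Finset (Fin n → ℕ) :=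
  Fintype.piFinset fun i => Icc (lam i.succ) (lam i.castSucc)

section Shape

variable {n : ℕ}

@[simp]
theorem inDiagram_val {lam : Fin n → ℕ} {i : Fin n} {j : ℕ} : InDiagram lam i j ↔ j < lam i :=
  ⟨fun ⟨_, h⟩ => h, fun h => ⟨i.2, h⟩⟩

theorem InDiagram.mono {lam : Fin n → ℕ} (hlam : Antitone lam) {i₁ i₂ j : ℕ}
    (h : InDiagram lam i₂ j) (hi : i₁ ≤ i₂) : InDiagram lam i₁ j :=
  ⟨hi.trans_lt h.1, h.2.trans_le (hlam hi)⟩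

theorem mem_interlacing {lam : Fin (n + 1) → ℕ} {mu : Fin n → ℕ} :
    mu ∈ interlacing lam ↔ ∀ i, lam i.succ ≤ mu i ∧ mu i ≤ lam i.castSucc := by
  simp [interlacing]

theorem mem_interlacing_iff_inDiagram {lam : Fin (n + 1) → ℕ} {mu : Fin n → ℕ} :
    mu ∈ interlacing lam ↔
      ∀ i j, (InDiagram lam (i + 1) j → InDiagram mu i j) ∧
        (InDiagram mu i j → InDiagram lam i j) := by
  rw [mem_interlacing]
  refine ⟨fun h i j => ⟨?_, ?_⟩, fun h i => ⟨le_of_forall_lt fun j hj => ?_,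
    le_of_forall_lt fun j hj => ?_⟩⟩
  · rintro ⟨hi, hj⟩
    exact ⟨by omega, hj.trans_le (h ⟨i, by omega⟩).1⟩
  · rintro ⟨hi, hj⟩
    exact ⟨by omega, hj.trans_le (h ⟨i, hi⟩).2⟩
  · exact inDiagram_val.1 ((h i j).1 (inDiagram_val (i := i.succ).2 hj))
  · exact inDiagram_val (i := i.castSucc).1 ((h i j).2 (inDiagram_val.2 hj))

theorem antitone_of_mem_interlacing {lam : Fin (n + 1) → ℕ} {mu : Fin n → ℕ}
    (h : mu ∈ interlacing lam) : Antitone mu := by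
  rw [mem_interlacing] at h
  cases n with
  | zero => exact Subsingleton.antitone mu
  | succ n => exact Fin.antitone_iff_succ_le.2 fun i => (h i.succ).2.trans (h i.castSucc).1

theorem sum_interlacing_det_chooseMatrix {R : Type*} [CommRing R] [BinomialRing R]
    {lam : Fin (n + 1) → ℕ} (hlam : Antitone lam) :
    ∑ mu ∈ interlacing lam, (chooseMatrix fun i => (i : R) - (mu i : R)).det =
      (chooseMatrix fun i => (i : R) - (lam i : R)).det := by
  rw [det_chooseMatrix_succ]
  refine (det_of_sum_eq_sum_piFinset _
    fun (i : Fin n) (m : ℕ) (j : Fin n) => Ring.choose ((i : R) - (m : R)) (j : ℕ)).symm.trans ?_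
  congr 1
  ext i j
  simp [sum_Icc_choose_sub _ _ (hlam Fin.castSucc_lt_succ.le)]

end Shape

/-! ### The branching rule for tableaux -/

section Tableau

variable {n : ℕ} {T : ℕ → ℕ → ℕ}

/-- The tableau `T` with its entries larger than `n` deleted. Empty cells hold `0`. -/
def truncate (n : ℕ) (T : ℕ → ℕ → ℕ) (i j : ℕ) : ℕ :=
  if T i j ≤ n then T i j else 0

open Classical in
/-- The tableau `T` with the entry `k` added in the empty cells of the diagram of `lam`. -/
noncomputable def fillEmpty (k : ℕ) {m : ℕ} (lam : Fin m → ℕ) (T : ℕ → ℕ → ℕ) (i j : ℕ) : ℕ :=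
  if T i j = 0 ∧ InDiagram lam i j then k else T i j

-- With the order conditions stated on the support, they can be checked without knowing the shape.
theorem isSSYT_iff {lam : Fin n → ℕ} :
    IsSSYT n lam T ↔
      (∀ i j, T i j ≠ 0 ↔ InDiagram lam i j) ∧
      (∀ i j, T i j ≤ n) ∧
      (∀ i j₁ j₂, j₁ ≤ j₂ → T i j₂ ≠ 0 → T i j₁ ≤ T i j₂) ∧
      (∀ i₁ i₂ j, i₁ < i₂ → T i₂ j ≠ 0 → T i₁ j < T i₂ j) := by
  constructor
  · rintro ⟨hsupp, hmem, hrow, hcol⟩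
    refine ⟨fun i j => ⟨hsupp i j, fun ⟨hi, hj⟩ => ?_⟩, fun i j => ?_, fun i j₁ j₂ hj h => ?_,
      fun i₁ i₂ j hi h => ?_⟩
    · exact Nat.one_le_iff_ne_zero.1 (hmem ⟨i, hi⟩ j hj).1
    · by_cases h : T i j = 0
      · exact h ▸ n.zero_le
      · obtain ⟨hi, hj⟩ := hsupp i j h
        exact (hmem ⟨i, hi⟩ j hj).2
    · obtain ⟨hi, hj₂⟩ := hsupp i j₂ h
      exact hrow ⟨i, hi⟩ j₁ j₂ hj hj₂
    · obtain ⟨hi₂, hj⟩ := hsupp i₂ j h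
      exact hcol ⟨i₁, hi.trans hi₂⟩ ⟨i₂, hi₂⟩ j hi hj
  · rintro ⟨hsupp, hle, hrow, hcol⟩
    have ne_zero (i : Fin n) (j : ℕ) (hj : j < lam i) : T i j ≠ 0 :=
      (hsupp i j).2 (inDiagram_val.2 hj)
    exact ⟨fun i j => (hsupp i j).1,
      fun i j hj => ⟨Nat.one_le_iff_ne_zero.2 (ne_zero i j hj), hle i j⟩,
      fun i j₁ j₂ hj hj₂ => hrow i j₁ j₂ hj (ne_zero i j₂ hj₂),
      fun i₁ i₂ j hi hj => hcol i₁ i₂ j hi (ne_zero i₂ j hj)⟩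

namespace IsSSYT

theorem ne_zero_iff {lam : Fin n → ℕ} (hT : IsSSYT n lam T) (i j : ℕ) :
    T i j ≠ 0 ↔ InDiagram lam i j :=
  (isSSYT_iff.1 hT).1 i j

theorem entry_le {lam : Fin n → ℕ} (hT : IsSSYT n lam T) (i j : ℕ) : T i j ≤ n :=
  (isSSYT_iff.1 hT).2.1 i j

theorem row_weak {lam : Fin n → ℕ} (hT : IsSSYT n lam T) {i j₁ j₂ : ℕ} (hj : j₁ ≤ j₂)
    (h : T i j₂ ≠ 0) : T i j₁ ≤ T i j₂ :=
  (isSSYT_iff.1 hT).2.2.1 i j₁ j₂ hj h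

theorem col_strict {lam : Fin n → ℕ} (hT : IsSSYT n lam T) {i₁ i₂ j : ℕ} (hi : i₁ < i₂)
    (h : T i₂ j ≠ 0) : T i₁ j < T i₂ j :=
  (isSSYT_iff.1 hT).2.2.2 i₁ i₂ j hi h

theorem ne_zero_of_le_left {lam : Fin n → ℕ} (hT : IsSSYT n lam T) {i j₁ j₂ : ℕ} (hj : j₁ ≤ j₂)
    (h : T i j₂ ≠ 0) : T i j₁ ≠ 0 := by
  rw [hT.ne_zero_iff] at h ⊢
  exact ⟨h.1, hj.trans_lt h.2⟩

theorem shape_unique {lam mu : Fin n → ℕ} (hT : IsSSYT n lam T) (hT' : IsSSYT n mu T) :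
    lam = mu :=
  funext fun i => eq_of_forall_lt_iff fun j => by
    rw [← inDiagram_val, ← inDiagram_val, ← hT.ne_zero_iff, hT'.ne_zero_iff]

theorem lt_entry {lam : Fin n → ℕ} (hT : IsSSYT n lam T) (hlam : Antitone lam) {i j : ℕ}
    (h : T i j ≠ 0) : i < T i j := by
  induction i with
  | zero => exact Nat.pos_of_ne_zero h
  | succ i ih =>
    have h' : T i j ≠ 0 :=
      (hT.ne_zero_iff i j).2 (((hT.ne_zero_iff (i + 1) j).1 h).mono hlam i.le_succ)
    exact (Nat.succ_le_of_lt (ih h')).trans_lt (hT.col_strict (lt_add_one i) h)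

theorem exists_shape_truncate {lam : Fin (n + 1) → ℕ} (hT : IsSSYT (n + 1) lam T)
    (hlam : Antitone lam) :
    ∃ mu : Fin n → ℕ, ∀ i j, truncate n T i j ≠ 0 ↔ InDiagram mu i j := by
  have row_eq_Iio (i : Fin n) : ∃ m, {j | truncate n T i j ≠ 0} = Set.Iio m := by
    have hlower : IsLowerSet {j | truncate n T i j ≠ 0} := by
      intro j₂ j₁ hj h
      have hrow := hT.row_weak (i := i) hj
      have hne := hT.ne_zero_of_le_left (i := i) hj
      simp only [truncate, Set.mem_ofPred_eq] at h ⊢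
      grind
    refine hlower.eq_univ_or_Iio.resolve_left fun huniv => ?_
    have hmem : lam i.castSucc ∈ {j | truncate n T i j ≠ 0} := huniv ▸ Set.mem_univ _
    have hzero := hT.ne_zero_iff i (lam i.castSucc)
    rw [← Fin.val_castSucc, inDiagram_val] at hzero
    simp only [truncate, Set.mem_ofPred_eq] at hmem
    grind
  choose mu hmu using row_eq_Iio
  refine ⟨mu, fun i j => ?_⟩
  by_cases hi : i < n
  · lift i to Fin n using hi
    rw [inDiagram_val]
    exact Set.ext_iff.1 (hmu i) j
  · -- All entries in a row of index `i ≥ n` exceed `n`.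
    have hentry := hT.lt_entry hlam (i := i) (j := j)
    refine iff_of_false ?_ fun h => hi h.1
    grind [truncate]

theorem exists_interlacing_truncate {lam : Fin (n + 1) → ℕ} (hT : IsSSYT (n + 1) lam T)
    (hlam : Antitone lam) : ∃ mu ∈ interlacing lam, IsSSYT n mu (truncate n T) := by
  obtain ⟨mu, hmu⟩ := hT.exists_shape_truncate hlam
  refine ⟨mu, mem_interlacing_iff_inDiagram.2 fun i j => ⟨fun h => ?_, fun h => ?_⟩,
    isSSYT_iff.2 ⟨hmu, fun i j => ?_, fun i j₁ j₂ hj h => ?_, fun i₁ i₂ j hi h => ?_⟩⟩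
  · have hpos := (hT.ne_zero_iff i j).2 (h.mono hlam i.le_succ)
    have hcol := hT.col_strict (lt_add_one i) ((hT.ne_zero_iff (i + 1) j).2 h)
    have hle := hT.entry_le (i + 1) j
    rw [← hmu, truncate, if_pos (by omega)]
    exact hpos
  · rw [← hmu] at h
    rw [← hT.ne_zero_iff]
    grind [truncate]
  · grind [truncate]
  · have hrow := hT.row_weak (i := i) hj
    grind [truncate]
  · have hcol := hT.col_strict (j := j) hi
    grind [truncate]

theorem fillEmpty_of_mem_interlacing {lam : Fin (n + 1) → ℕ} {mu : Fin n → ℕ} (hT : IsSSYT n mu T)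
    (hlam : Antitone lam) (hmu : mu ∈ interlacing lam) :
    IsSSYT (n + 1) lam (fillEmpty (n + 1) lam T) := by
  rw [mem_interlacing_iff_inDiagram] at hmu
  have hle := hT.entry_le
  have hsub (i j) (h : T i j ≠ 0) : InDiagram lam i j := (hmu i j).2 ((hT.ne_zero_iff i j).1 h)
  have ne_zero_above {i₁ i₂ j} (hi : i₁ < i₂) (h : InDiagram lam i₂ j) : T i₁ j ≠ 0 :=
    (hT.ne_zero_iff i₁ j).2 ((hmu i₁ j).1 (h.mono hlam hi))
  refine isSSYT_iff.2 ⟨fun i j => ?_, fun i j => ?_, fun i j₁ j₂ hj h => ?_,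
    fun i₁ i₂ j hi h => ?_⟩
  · grind [fillEmpty]
  · grind [fillEmpty]
  · have hrow := hT.row_weak (i := i) hj
    have hne := hT.ne_zero_of_le_left (i := i) hj
    grind [fillEmpty]
  · have hcol := hT.col_strict (j := j) hi
    have hne := ne_zero_above (j := j) hi
    grind [fillEmpty]

theorem fillEmpty_truncate {lam : Fin (n + 1) → ℕ} (hT : IsSSYT (n + 1) lam T) :
    fillEmpty (n + 1) lam (truncate n T) = T := by
  ext i j
  have hsupp := hT.ne_zero_iff i j
  have hle := hT.entry_le i j
  grind [truncate, fillEmpty]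

theorem truncate_fillEmpty {m : ℕ} {lam : Fin m → ℕ} {mu : Fin n → ℕ} (hT : IsSSYT n mu T) :
    truncate n (fillEmpty (n + 1) lam T) = T := by
  ext i j
  have hle := hT.entry_le i j
  grind [truncate, fillEmpty]

end IsSSYT

theorem bijOn_truncate {lam : Fin (n + 1) → ℕ} (hlam : Antitone lam) :
    Set.BijOn (truncate n) {T | IsSSYT (n + 1) lam T}
      (⋃ mu ∈ (interlacing lam : Set (Fin n → ℕ)), {T | IsSSYT n mu T}) := by
  refine Set.InvOn.bijOn (f' := fillEmpty (n + 1) lam)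
    ⟨fun T hT => hT.fillEmpty_truncate, fun T hT => ?_⟩ (fun T hT => ?_) fun T hT => ?_
  · obtain ⟨mu, -, hT⟩ := Set.mem_iUnion₂.1 hT
    exact hT.truncate_fillEmpty
  · obtain ⟨mu, hmu, hT⟩ := hT.exists_interlacing_truncate hlam
    exact Set.mem_iUnion₂.2 ⟨mu, hmu, hT⟩
  · obtain ⟨mu, hmu, hT⟩ := Set.mem_iUnion₂.1 hT
    exact hT.fillEmpty_of_mem_interlacing hlam hmu

theorem finite_setOf_isSSYT (lam : Fin n → ℕ) : {T | IsSSYT n lam T}.Finite := by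
  let entries (T : ℕ → ℕ → ℕ) (c : Σ i : Fin n, Fin (lam i)) : ℕ := T c.1 c.2
  refine Set.Finite.of_injOn (f := entries) (t := Set.Iic fun _ => n)
    (fun T hT c => hT.entry_le c.1 c.2) (fun T hT T' hT' h => ?_) (Set.finite_Iic _)
  ext i j
  by_cases hij : InDiagram lam i j
  · obtain ⟨hi, hj⟩ := hij
    exact congrFun h ⟨⟨i, hi⟩, ⟨j, hj⟩⟩
  · rw [not_ne_iff.1 (mt (hT.ne_zero_iff i j).1 hij), not_ne_iff.1 (mt (hT'.ne_zero_iff i j).1 hij)]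

theorem ncard_setOf_isSSYT_succ {lam : Fin (n + 1) → ℕ} (hlam : Antitone lam) :
    {T | IsSSYT (n + 1) lam T}.ncard = ∑ mu ∈ interlacing lam, {T | IsSSYT n mu T}.ncard := by
  have hdisj : (interlacing lam : Set (Fin n → ℕ)).PairwiseDisjoint
      fun mu => {T | IsSSYT n mu T} := fun mu _ nu _ hne =>
    Set.disjoint_left.2 fun T hmu hnu => hne (hmu.shape_unique hnu)
  rw [← (bijOn_truncate hlam).injOn.ncard_image, (bijOn_truncate hlam).image_eq,
    (finite_toSet _).ncard_biUnion (fun mu _ => finite_setOf_isSSYT mu) hdisj,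
    finsum_mem_coe_finset]

theorem setOf_isSSYT_zero (lam : Fin 0 → ℕ) : {T | IsSSYT 0 lam T} = {0} := by
  ext T
  refine ⟨fun hT => ?_, ?_⟩
  · ext i j
    exact Nat.le_zero.1 (hT.entry_le i j)
  · rintro rfl
    simp [IsSSYT]

theorem natCast_ncard_setOf_isSSYT_eq_det {R : Type*} [CommRing R] [BinomialRing R]
    {lam : Fin n → ℕ} (hlam : Antitone lam) :
    ({T | IsSSYT n lam T}.ncard : R) = (chooseMatrix fun i => (i : R) - (lam i : R)).det := by
  induction n with
  | zero => simp [setOf_isSSYT_zero]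
  | succ n ih =>
    rw [ncard_setOf_isSSYT_succ hlam, ← sum_interlacing_det_chooseMatrix hlam, Nat.cast_sum]
    exact sum_congr rfl fun mu hmu => ih (antitone_of_mem_interlacing hmu)

end Tableau

/-- The number of semistandard Young tableaux of shape `λ` with entries in `{1, …, n}`
equals `∏_{i < j} (λ_i − λ_j + j − i)/(j − i)` (Weyl dimension formula). -/
theorem ssyt_count_eq_weyl_product (n : ℕ) (hn : 1 ≤ n) (lam : Fin n → ℕ)
    (hlam : Antitone lam) :
    (Set.ncard {T : ℕ → ℕ → ℕ | IsSSYT n lam T} : ℚ) =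
      ∏ p ∈ Finset.univ.filter (fun p : Fin n × Fin n => p.1 < p.2),
        ((lam p.1 : ℚ) - (lam p.2 : ℚ) + (p.2.1 : ℚ) - (p.1.1 : ℚ)) /
          ((p.2.1 : ℚ) - (p.1.1 : ℚ)) := by
  rw [natCast_ncard_setOf_isSSYT_eq_det hlam, det_chooseMatrix_eq_prod_div,
    prod_finset_product _ univ (fun i => Ioi i) (by simp)]
  refine prod_congr rfl fun i _ => prod_congr rfl fun j _ => ?_
  ring
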